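/- Let e ∈ {0,1,2} and let r be an integer with r ≥ e+3 and r ≡ e+1 (mod 2). Then the following are equivalent: (i) there exist an F-vector space U of dimension r+2, a hyperplane H of U, a nondegenerate quadratic form Q on H of Witt defect e, a generator Π of Q, and a hyperbolic, parabolic or elliptic avsp for (U, H, Q, Π) (according as e = 0, 1 or 2); (ii) there exist an F-vector space V of dimension r+3 and a nondegenerate quadratic form Q' on V of Witt defect e admitting a spread. -/

import Mathlib

open Module Submodule

section Defs

variable {F : Type*} [Field F] {V : Type*} [AddCommGroup V] [Module F V]

/-- A subspace is totally singular if the quadratic form vanishes on it. -/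
def IsTotallySingular (Q : QuadraticForm F V) (W : Submodule F V) : Prop :=
  ∀ x ∈ W, Q x = 0

/-- The Witt index: maximal dimension of a totally singular subspace. -/
noncomputable def wittIndex (Q : QuadraticForm F V) : ℕ :=
  sSup {n : ℕ | ∃ W : Submodule F V, IsTotallySingular Q W ∧ Module.finrank F ↥W = n}

/-- Nondegeneracy: the only singular vector orthogonal to everything is `0`. -/
def QuadNondeg (Q : QuadraticForm F V) : Prop :=
  ∀ v : V, Q v = 0 → (∀ x : V, QuadraticMap.polar Q v x = 0) → v = 0

/-- A generator: totally singular subspace of dimension the Witt index. -/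
def IsGenerator (Q : QuadraticForm F V) (G : Submodule F V) : Prop :=
  IsTotallySingular Q G ∧ Module.finrank F ↥G = wittIndex Q

/-- A spread of `Q`. -/
def IsSpread (Q : QuadraticForm F V) (S : Set (Submodule F V)) : Prop :=
  (∀ G ∈ S, IsGenerator Q G) ∧
  (∀ G ∈ S, ∀ G' ∈ S, G ≠ G' → G ⊓ G' = ⊥) ∧
  (∀ v : V, Q v = 0 → ∃ G ∈ S, v ∈ G)

/-- The perp of a vector with respect to the polar form of `Q`. -/
def vecPerp (Q : QuadraticForm F V) (u : V) : Submodule F V :=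
  LinearMap.ker (QuadraticMap.polarBilin Q u)

/-- The perp of a subspace with respect to the polar form of `Q`. -/
def subPerp (Q : QuadraticForm F V) (G : Submodule F V) : Submodule F V :=
  ⨅ g ∈ G, vecPerp Q g

/-- Hyperbolic (e = 0), parabolic (e = 1) or elliptic (e = 2) affine vector space
partition for `(U, H, Q, Pgen)`. -/
def IsAvsp [Fintype F] (e r : ℕ) {U : Type*} [AddCommGroup U] [Module F U]
    (H : Submodule F U) (Q : QuadraticForm F ↥H) (Pgen : Submodule F ↥H)
    (P : Set (Submodule F U)) : Prop :=
  P.ncard = Fintype.card F ^ ((r + e + 1) / 2) ∧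
  (∀ S ∈ P, Module.finrank F ↥S = (r + 3 - e) / 2 ∧ ¬ S ≤ H) ∧
  (∀ L : Submodule F U, Module.finrank F ↥L = 1 → ¬ L ≤ H → ∃! S, S ∈ P ∧ L ≤ S) ∧
  (∀ S ∈ P, IsGenerator Q (S.comap H.subtype) ∧ S.comap H.subtype ⊓ Pgen = ⊥) ∧
  (∀ S ∈ P, ∀ T ∈ P, S ≠ T → S.comap H.subtype ≠ T.comap H.subtype) ∧
  (∀ S ∈ P, ∀ T ∈ P, S ≠ T → Module.finrank F ↥(S ⊓ T) ≤ 1) ∧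
  (∀ S ∈ P, ∀ T ∈ P, S ≠ T →
    Module.finrank F ↥(S.comap H.subtype ⊓ T.comap H.subtype) = 1 →
      QuadNondeg (Q.comp ((S ⊔ T).comap H.subtype).subtype) ∧
      Module.finrank F ↥((S ⊔ T).comap H.subtype) =
        2 * wittIndex (Q.comp ((S ⊔ T).comap H.subtype).subtype))

end Defs

/-!
Let `z ≠ 0` be a singular vector of `Q'`. The quotient `U = V / ⟨z⟩` carries the hyperplane
`H = z^⊥ / ⟨z⟩`, on which `Q'` induces a form `Q` with the same Witt defect, and conversely every
form on a hyperplane arises in this way. A vector of `U` outside `H` lifts to exactly one singular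
vector of `V`, because `Q'` is affine and nonconstant on the corresponding coset of `⟨z⟩`. Hence
projecting to `U` the members of a spread that avoid `z` gives a partition of `U \ H`, and each
member of an avsp lifts to a unique generator of `Q'`.

Two generators of `Q'` meeting in `0` span a nondegenerate subspace. If their projections meet in a
point of `H`, this subspace contains `z`, so it induces a hyperbolic form on `H`: this is
condition (3). In the other direction, a nonzero vector of `z^⊥` common to two lifts would be
a radical vector of that form. Finally, counting singular vectors shows that a partial spread is
a spread as soon as it has `q ^ (n + e) + 1` members, where `n + 1` is the Witt index of `Q'`, so
the lifts together with the generator over `Π` cover every singular vector.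
-/

section LinearAlgebra

variable {F V U : Type*} [Field F] [AddCommGroup V] [Module F V] [AddCommGroup U] [Module F U]

lemma finrank_inf_eq_finrank_comap_subtype (S H : Submodule F U) :
    finrank F ↥(S ⊓ H) = finrank F (S.comap H.subtype) := by
  rw [inf_comm, ← map_comap_subtype, finrank_map_subtype_eq]

lemma finrank_comap_subtype_add_one [FiniteDimensional F U] {H S : Submodule F U}
    (hH : finrank F H + 1 = finrank F U) (hS : ¬S ≤ H) :
    finrank F (S.comap H.subtype) + 1 = finrank F S := by
  have hlt : finrank F H < finrank F ↥(S ⊔ H) := finrank_lt_finrank_of_lt (by simpa using hS)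
  have := (S ⊔ H).finrank_le
  have := finrank_sup_add_finrank_inf_eq S H
  rw [finrank_inf_eq_finrank_comap_subtype] at this
  omega

variable [FiniteDimensional F V]

lemma finrank_map_add_finrank_inf_ker (f : V →ₗ[F] U) (W : Submodule F V) :
    finrank F (W.map f) + finrank F ↥(W ⊓ LinearMap.ker f) = finrank F W := by
  rw [inf_comm, finrank_inf_eq_finrank_comap_subtype, ← LinearMap.range_domRestrict,
    ← LinearMap.finrank_range_add_finrank_ker (f.domRestrict W), LinearMap.ker_domRestrict]

lemma finrank_map_inf_map (f : V →ₗ[F] U) {W W' : Submodule F V} (h : W ⊓ W' = ⊥) :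
    finrank F ↥(W.map f ⊓ W'.map f) + finrank F ↥(W ⊓ LinearMap.ker f) +
      finrank F ↥(W' ⊓ LinearMap.ker f) = finrank F ↥((W ⊔ W') ⊓ LinearMap.ker f) := by
  have hsup := finrank_sup_add_finrank_inf_eq W W'
  have hmap := finrank_sup_add_finrank_inf_eq (W.map f) (W'.map f)
  rw [h, finrank_bot] at hsup
  rw [← Submodule.map_sup] at hmap
  have := finrank_map_add_finrank_inf_ker f W
  have := finrank_map_add_finrank_inf_ker f W'
  have := finrank_map_add_finrank_inf_ker f (W ⊔ W')
  omega

end LinearAlgebra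

section Witt

variable {F V : Type*} [Field F] [AddCommGroup V] [Module F V] {Q : QuadraticForm F V}
  {W M : Submodule F V}

lemma IsTotallySingular.polar_eq_zero (hW : IsTotallySingular Q W) {x y : V} (hx : x ∈ W)
    (hy : y ∈ W) : QuadraticMap.polar Q x y = 0 := by
  simp [QuadraticMap.polar, hW _ (W.add_mem hx hy), hW _ hx, hW _ hy]

lemma IsTotallySingular.sup_span_singleton (hW : IsTotallySingular Q W) {v : V} (hv : Q v = 0)
    (hp : ∀ x ∈ W, QuadraticMap.polar Q x v = 0) : IsTotallySingular Q (W ⊔ span F {v}) := by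
  intro x hx
  obtain ⟨y, hy, c, rfl⟩ := by simpa [mem_sup, mem_span_singleton] using hx
  simp [QuadraticMap.map_add, hW y hy, QuadraticMap.map_smul, hv, QuadraticMap.polar_smul_right,
    hp y hy]

lemma map_add_smul_of_singular {z : V} (hz : Q z = 0) (v : V) (c : F) :
    Q (v + c • z) = Q v + c * QuadraticMap.polar Q z v := by
  simp [QuadraticMap.map_add Q, QuadraticMap.map_smul, hz, QuadraticMap.polar_smul_right,
    QuadraticMap.polar_comm Q v z]

lemma quadNondeg_comp_subtype_iff : QuadNondeg (Q.comp M.subtype) ↔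
    ∀ v ∈ M, Q v = 0 → (∀ x ∈ M, QuadraticMap.polar Q v x = 0) → v = 0 := by
  simp [QuadNondeg, QuadraticMap.polar]

variable [FiniteDimensional F V]

lemma IsTotallySingular.finrank_le_wittIndex (hW : IsTotallySingular Q W) :
    finrank F W ≤ wittIndex Q :=
  le_csSup ⟨finrank F V, by rintro _ ⟨W, -, rfl⟩; exact W.finrank_le⟩ ⟨W, hW, rfl⟩

lemma exists_isGenerator (Q : QuadraticForm F V) : ∃ W, IsGenerator Q W :=
  Nat.sSup_mem (s := {n : ℕ | ∃ W : Submodule F V, IsTotallySingular Q W ∧ finrank F W = n})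
    ⟨0, ⊥, by simp [IsTotallySingular], finrank_bot F V⟩
    ⟨finrank F V, by rintro _ ⟨W, -, rfl⟩; exact W.finrank_le⟩

lemma wittIndex_le {n : ℕ} (h : ∀ W, IsTotallySingular Q W → finrank F W ≤ n) :
    wittIndex Q ≤ n := by
  obtain ⟨W, hW, hn⟩ := exists_isGenerator Q
  exact hn ▸ h W hW

lemma IsGenerator.mem_of_polar_eq_zero (hW : IsGenerator Q W) {v : V} (hv : Q v = 0)
    (hp : ∀ x ∈ W, QuadraticMap.polar Q x v = 0) : v ∈ W := by
  have h := (hW.1.sup_span_singleton hv hp).finrank_le_wittIndex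
  rw [← hW.2] at h
  rw [eq_of_le_of_finrank_le (le_sup_left : W ≤ W ⊔ span F {v}) h]
  exact mem_sup_right (mem_span_singleton_self v)

lemma IsGenerator.wittIndex_comp_subtype (hW : IsGenerator Q W) (hM : W ≤ M) :
    wittIndex (Q.comp M.subtype) = wittIndex Q := by
  apply le_antisymm
  · refine wittIndex_le fun X hX => ?_
    rw [← finrank_map_subtype_eq M X]
    apply IsTotallySingular.finrank_le_wittIndex
    rintro _ ⟨x, hx, rfl⟩
    exact hX x hx
  · rw [← hW.2, ← (comapSubtypeEquivOfLe hM).finrank_eq]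
    exact IsTotallySingular.finrank_le_wittIndex fun x hx => hW.1 _ hx

lemma IsGenerator.quadNondeg_sup {G G' : Submodule F V} (hG : IsGenerator Q G)
    (hG' : IsGenerator Q G') (h : G ⊓ G' = ⊥) : QuadNondeg (Q.comp (G ⊔ G').subtype) := by
  rw [quadNondeg_comp_subtype_iff]
  intro v _ hv hp
  have hmem : v ∈ G ⊓ G' :=
    ⟨hG.mem_of_polar_eq_zero hv fun x hx =>
        QuadraticMap.polar_comm Q v x ▸ hp x (mem_sup_left hx),
      hG'.mem_of_polar_eq_zero hv fun x hx =>
        QuadraticMap.polar_comm Q v x ▸ hp x (mem_sup_right hx)⟩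
  simpa [h] using hmem

end Witt

section PartialSpread

variable {F V : Type*} [Field F] [AddCommGroup V] [Module F V] {Q : QuadraticForm F V}

/-- A partial spread of `Q`: a set of generators of `Q` meeting pairwise in `0`, not required to
cover the singular vectors. -/
def IsPartialSpread (Q : QuadraticForm F V) (S : Set (Submodule F V)) : Prop :=
  (∀ G ∈ S, IsGenerator Q G) ∧ ∀ G ∈ S, ∀ G' ∈ S, G ≠ G' → G ⊓ G' = ⊥

lemma IsPartialSpread.insert {S : Set (Submodule F V)} (hS : IsPartialSpread Q S)
    {G₀ : Submodule F V} (hG₀ : IsGenerator Q G₀) (hinf : ∀ G ∈ S, G ⊓ G₀ = ⊥) :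
    IsPartialSpread Q (insert G₀ S) := by
  refine ⟨Set.forall_mem_insert.2 ⟨hG₀, hS.1⟩, ?_⟩
  rintro G (rfl | hG) G' (rfl | hG') hne
  · exact absurd rfl hne
  · rw [inf_comm, hinf G' hG']
  · exact hinf G hG
  · exact hS.2 G hG G' hG' hne

lemma IsSpread.isPartialSpread {S : Set (Submodule F V)} (hS : IsSpread Q S) :
    IsPartialSpread Q S :=
  ⟨hS.1, hS.2.1⟩

end PartialSpread

section Counting

variable {F V : Type*} [Field F] [AddCommGroup V] [Module F V] {Q : QuadraticForm F V}
  {W : Submodule F V}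

lemma mem_subPerp {v : V} : v ∈ subPerp Q W ↔ ∀ w ∈ W, QuadraticMap.polar Q w v = 0 := by
  simp [subPerp, vecPerp]

lemma QuadNondeg.finrank_add_finrank_subPerp [FiniteDimensional F V] (hQ : QuadNondeg Q)
    (hW : IsTotallySingular Q W) : finrank F W + finrank F (subPerp Q W) = finrank F V := by
  have hperp : subPerp Q W = LinearMap.BilinForm.orthogonal Q.polarBilin W :=
    Submodule.ext fun v => mem_subPerp
  have hker : W ⊓ Q.polarBilin.ker = ⊥ := by
    rw [eq_bot_iff]
    exact fun v ⟨hv, hker⟩ => hQ v (hW v hv) (DFunLike.congr_fun (LinearMap.mem_ker.1 hker))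
  rw [hperp, LinearMap.BilinForm.finrank_add_finrank_orthogonal', hker, finrank_bot, add_zero]

variable [Fintype F]

lemma card_mul_card_fiber_of_ne_zero {M : Type*} [AddCommGroup M] [Module F M] [Fintype M]
    [DecidableEq F] {f : M →ₗ[F] F} (hf : f ≠ 0) (a : F) :
    Fintype.card F * Fintype.card {w // f w = a} = Fintype.card M := by
  have hsurj := LinearMap.surjective_of_ne_zero hf
  have hcard := Finset.card_eq_sum_card_fiberwise (f := f) (s := Finset.univ) (t := Finset.univ)
    (by simp)
  rw [Finset.sum_congr rfl fun b _ =>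
    AddMonoidHom.card_fiber_eq_of_mem_range f (hsurj b) (hsurj a)] at hcard
  simpa [Fintype.card_subtype] using hcard.symm

section Fintype

variable [Fintype V]

open scoped Classical in
lemma IsGenerator.card_mul_card_fiber (hW : IsGenerator Q W) (v : V) :
    Fintype.card F * Fintype.card {w : W // Q (v + w) = 0} +
        (if v ∈ subPerp Q W then Fintype.card W else 0) =
      Fintype.card W + if v ∈ W then Fintype.card F * Fintype.card W else 0 := by
  have hQ (w : W) : Q (v + w) = Q v + QuadraticMap.polar Q w v := by
    rw [QuadraticMap.map_add Q, hW.1 w w.2, add_zero, QuadraticMap.polar_comm]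
  by_cases hv : v ∈ subPerp Q W
  · have hp (w : W) : QuadraticMap.polar Q w v = 0 := mem_subPerp.1 hv w w.2
    by_cases hvW : v ∈ W
    · simp [hQ, hp, hv, hvW, hW.1 v hvW, add_comm]
    · have hv0 : Q v ≠ 0 := fun h => hvW (hW.mem_of_polar_eq_zero h (mem_subPerp.1 hv))
      simp [hQ, hp, hv, hvW, hv0]
  · have hvW : v ∉ W := fun h => hv (mem_subPerp.2 fun w hw => hW.1.polar_eq_zero hw h)
    have hf : (Q.polarBilin v).domRestrict W ≠ 0 := fun h => hv <| mem_subPerp.2 fun w hw => by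
      simpa [QuadraticMap.polar_comm] using DFunLike.congr_fun h ⟨w, hw⟩
    have := card_mul_card_fiber_of_ne_zero hf (-Q v)
    simpa [hQ, hv, hvW, QuadraticMap.polar_comm Q v, eq_neg_iff_add_eq_zero, add_comm] using this

open scoped Classical in
lemma QuadNondeg.card_mul_card_singular (hQ : QuadNondeg Q) :
    Fintype.card F * Fintype.card {v // Q v = 0} + Fintype.card F ^ (finrank F V - wittIndex Q) =
      Fintype.card F ^ finrank F V + Fintype.card F ^ (wittIndex Q + 1) := by
  obtain ⟨W, hW⟩ := exists_isGenerator Q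
  have hsum : ∑ v : V, Fintype.card {w : W // Q (v + w) = 0} =
      Fintype.card W * Fintype.card {v // Q v = 0} := by
    rw [← Fintype.card_sigma, ← Fintype.card_prod]
    exact Fintype.card_congr
      { toFun p := (p.2.1, ⟨p.1 + p.2.1, p.2.2⟩)
        invFun p := ⟨p.2 - p.1, p.1, by simp [p.2.2]⟩
        left_inv p := Sigma.subtype_ext (by simp) rfl
        right_inv p := by simp }
  have hfib := Fintype.sum_congr _ _ hW.card_mul_card_fiber
  simp only [Finset.sum_add_distrib, ← Finset.mul_sum, hsum, ← Finset.sum_filter,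
    Finset.sum_const, Finset.card_univ, ← Fintype.card_subtype, smul_eq_mul] at hfib
  have hperp := hQ.finrank_add_finrank_subPerp hW.1
  have hcard : Fintype.card (subPerp Q W) = Fintype.card F ^ (finrank F V - wittIndex Q) := by
    rw [card_eq_pow_finrank (K := F), ← hW.2, ← hperp, Nat.add_sub_cancel_left]
  have hcardW : Fintype.card W = Fintype.card F ^ wittIndex Q := by
    rw [card_eq_pow_finrank (K := F), hW.2]
  rw [← card_eq_pow_finrank, pow_succ', ← hcard, ← hcardW]
  refine Nat.eq_of_mul_eq_mul_left (Fintype.card_pos (α := W)) ?_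
  linarith

end Fintype

variable [FiniteDimensional F V]

lemma QuadNondeg.ncard_singular_diff_zero (hQ : QuadNondeg Q) {n e : ℕ}
    (hn : wittIndex Q = n + 1) (he : finrank F V = 2 * (n + 1) + e) :
    ({v | Q v = 0} \ {0}).ncard =
      (Fintype.card F ^ (n + e) + 1) * (Fintype.card F ^ (n + 1) - 1) := by
  classical
  have := Module.finite_of_finite F (M := V)
  have := Fintype.ofFinite V
  have hcount := hQ.card_mul_card_singular
  rw [hn, he, show 2 * (n + 1) + e - (n + 1) = n + e + 1 by omega] at hcount
  have hcancel : Fintype.card {v // Q v = 0} + Fintype.card F ^ (n + e) =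
      Fintype.card F ^ (n + e) * Fintype.card F ^ (n + 1) + Fintype.card F ^ (n + 1) :=
    Nat.eq_of_mul_eq_mul_left (Fintype.card_pos (α := F)) (by linear_combination hcount)
  rw [Set.ncard_sdiff_singleton_of_mem (by simp), ← Nat.card_coe_set_eq, Set.coe_ofPred,
    Nat.card_eq_fintype_card]
  obtain ⟨k, hk⟩ := Nat.exists_eq_add_of_le' (Nat.one_le_pow (n + 1) _ (Fintype.card_pos (α := F)))
  rw [hk] at hcancel ⊢
  have hcard : Fintype.card {v // Q v = 0} = (Fintype.card F ^ (n + e) + 1) * k + 1 := by linarith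
  rw [hcard, Nat.add_sub_cancel, Nat.add_sub_cancel]

namespace IsPartialSpread

variable {S : Set (Submodule F V)}

lemma ncard_biUnion_diff_zero (hS : IsPartialSpread Q S) :
    (⋃ G ∈ S, (G : Set V) \ {0}).ncard =
      S.ncard * (Fintype.card F ^ wittIndex Q - 1) := by
  have := Module.finite_of_finite F (M := V)
  have hdisj : S.PairwiseDisjoint fun G => (G : Set V) \ {0} := by
    intro G hG G' hG' hne
    refine Set.disjoint_left.2 fun v hv hv' => hv.2 ?_
    simpa [hS.2 G hG G' hG' hne] using (show v ∈ G ⊓ G' from ⟨hv.1, hv'.1⟩)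
  have hcard (G) (hG : G ∈ S) : ((G : Set V) \ {0}).ncard = Fintype.card F ^ wittIndex Q - 1 := by
    rw [Set.ncard_sdiff_singleton_of_mem G.zero_mem, ← Nat.card_coe_set_eq, ← (hS.1 G hG).2,
      ← Nat.card_eq_fintype_card, ← natCard_eq_pow_finrank, SetLike.coe_sort_coe]
  rw [S.toFinite.ncard_biUnion (fun G _ => Set.toFinite _) hdisj, finsum_mem_congr rfl hcard,
    finsum_mem_eq_finite_toFinset_sum _ S.toFinite]
  simp [Set.ncard_eq_toFinset_card S]

lemma isSpread_iff_ncard (hQ : QuadNondeg Q) (hS : IsPartialSpread Q S) {n e : ℕ}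
    (hn : wittIndex Q = n + 1) (he : finrank F V = 2 * (n + 1) + e) :
    IsSpread Q S ↔ S.ncard = Fintype.card F ^ (n + e) + 1 := by
  have := Module.finite_of_finite F (M := V)
  have hunion := hS.ncard_biUnion_diff_zero
  have hsing := hQ.ncard_singular_diff_zero hn he
  have hpos : 0 < Fintype.card F ^ (n + 1) - 1 :=
    Nat.sub_pos_of_lt (Nat.one_lt_pow n.succ_ne_zero Fintype.one_lt_card)
  have hsub : ⋃ G ∈ S, (G : Set V) \ {0} ⊆ {v | Q v = 0} \ {0} :=
    Set.iUnion₂_subset fun G hG => Set.sdiff_subset_sdiff_left fun v hv => (hS.1 G hG).1 v hv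
  rw [hn] at hunion
  constructor
  · intro hspread
    have hsup : {v | Q v = 0} \ {0} ⊆ ⋃ G ∈ S, (G : Set V) \ {0} := by
      rintro v ⟨hv, hv0⟩
      obtain ⟨G, hG, hvG⟩ := hspread.2.2 v hv
      exact Set.mem_biUnion hG ⟨hvG, hv0⟩
    rw [hsub.antisymm hsup, hsing] at hunion
    exact (Nat.eq_of_mul_eq_mul_right hpos hunion).symm
  · intro hcard
    have heq := Set.eq_of_subset_of_ncard_le hsub (by rw [hunion, hsing, hcard])
    refine ⟨hS.1, hS.2, fun v hv => ?_⟩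
    by_cases hv0 : v = 0
    · obtain ⟨G, hG⟩ := Set.nonempty_of_ncard_ne_zero (hcard ▸ Nat.succ_ne_zero _ : S.ncard ≠ 0)
      exact ⟨G, hG, hv0 ▸ G.zero_mem⟩
    · obtain ⟨G, hG, hvG⟩ := Set.mem_iUnion₂.1 (heq.ge ⟨hv, hv0⟩)
      exact ⟨G, hG, hvG.1⟩

end IsPartialSpread

end Counting

section Residue

variable {F V U : Type*} [Field F] [AddCommGroup V] [Module F V] [AddCommGroup U] [Module F U]

lemma mem_vecPerp {Q : QuadraticForm F V} {u v : V} :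
    v ∈ vecPerp Q u ↔ QuadraticMap.polar Q u v = 0 := Iff.rfl

/-- `H` with the form `Q` is the residue `z^⊥ / ⟨z⟩` of `Q'` at its singular vector `z`. The
quotient `V / ⟨z⟩` is modelled by an arbitrary surjection `π` with kernel `⟨z⟩`, so that any given
`U` may serve as its target. -/
structure IsPointResidue (Q' : QuadraticForm F V) (z : V) (π : V →ₗ[F] U) (H : Submodule F U)
    (Q : QuadraticForm F H) : Prop where
  surjective : Function.Surjective π
  ker_eq : LinearMap.ker π = span F {z}
  singular : Q' z = 0
  comap_eq : H.comap π = vecPerp Q' z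
  ne_top : H ≠ ⊤
  form_eq : ∀ v (hv : π v ∈ H), Q ⟨π v, hv⟩ = Q' v

namespace IsPointResidue

variable {Q' : QuadraticForm F V} {z : V} {π : V →ₗ[F] U} {H : Submodule F U}
  {Q : QuadraticForm F H} {G L W M : Submodule F V} {S : Submodule F U}

lemma map_eq_zero (h : IsPointResidue Q' z π H Q) : π z = 0 :=
  LinearMap.mem_ker.1 (h.ker_eq ▸ mem_span_singleton_self z)

lemma exists_eq_add_smul (h : IsPointResidue Q' z π H Q) {v w : V} (hvw : π v = π w) :
    ∃ c : F, v = w + c • z := by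
  have hmem : v - w ∈ LinearMap.ker π := by simp [hvw]
  rw [h.ker_eq, mem_span_singleton] at hmem
  obtain ⟨c, hc⟩ := hmem
  exact ⟨c, by simp [hc]⟩

lemma map_mem_iff (h : IsPointResidue Q' z π H Q) {v : V} :
    π v ∈ H ↔ QuadraticMap.polar Q' z v = 0 := by
  rw [← mem_comap, h.comap_eq, mem_vecPerp]

lemma polar_eq (h : IsPointResidue Q' z π H Q) {v w : V} (hv : π v ∈ H) (hw : π w ∈ H) :
    QuadraticMap.polar Q ⟨π v, hv⟩ ⟨π w, hw⟩ = QuadraticMap.polar Q' v w := by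
  have hadd : π (v + w) ∈ H := map_add π v w ▸ H.add_mem hv hw
  simp [QuadraticMap.polar, ← h.form_eq _ hv, ← h.form_eq _ hw, ← h.form_eq _ hadd]

lemma exists_notMem (h : IsPointResidue Q' z π H Q) : ∃ v, π v ∉ H := by
  by_contra! hall
  refine h.ne_top (eq_top_iff.2 fun u _ => ?_)
  obtain ⟨v, rfl⟩ := h.surjective u
  exact hall v

lemma ne_zero (h : IsPointResidue Q' z π H Q) : z ≠ 0 := by
  rintro rfl
  obtain ⟨v, hv⟩ := h.exists_notMem
  exact hv (h.map_mem_iff.2 (by simp))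

lemma existsUnique_singular (h : IsPointResidue Q' z π H Q) {u : U} (hu : u ∉ H) :
    ∃! v, π v = u ∧ Q' v = 0 := by
  obtain ⟨v, rfl⟩ := h.surjective u
  have hp : QuadraticMap.polar Q' z v ≠ 0 := mt h.map_mem_iff.2 hu
  refine ⟨v + (-Q' v / QuadraticMap.polar Q' z v) • z, ⟨by simp [h.map_eq_zero], ?_⟩, ?_⟩
  · rw [map_add_smul_of_singular h.singular]
    field_simp
    simp
  · rintro w ⟨hw, hsing⟩
    obtain ⟨c, rfl⟩ := h.exists_eq_add_smul hw
    rw [map_add_smul_of_singular h.singular] at hsing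
    rw [eq_div_of_mul_eq hp (eq_neg_of_add_eq_zero_right hsing)]

lemma mem_of_map_mem (h : IsPointResidue Q' z π H Q) (hW : IsTotallySingular Q' W) {v : V}
    (hv : Q' v = 0) (hvH : π v ∉ H) (hmem : π v ∈ W.map π) : v ∈ W := by
  obtain ⟨w, hw, hwv⟩ := hmem
  rwa [(h.existsUnique_singular hvH).unique ⟨rfl, hv⟩ ⟨hwv, hW w hw⟩]

lemma isTotallySingular_comap_map (h : IsPointResidue Q' z π H Q) (hW : IsTotallySingular Q' W) :
    IsTotallySingular Q ((W.map π).comap H.subtype) := by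
  rintro ⟨_, hH⟩ ⟨w, hw, rfl⟩
  rw [h.form_eq, hW w hw]

lemma isTotallySingular_comap_map_subtype (h : IsPointResidue Q' z π H Q) {N : Submodule F H}
    (hN : IsTotallySingular Q N) : IsTotallySingular Q' ((N.map H.subtype).comap π) := by
  rintro v ⟨⟨y, hy⟩, hx, (rfl : y = π v)⟩
  rw [← h.form_eq v hy, hN _ hx]

lemma exists_polar_add_smul_eq_zero (h : IsPointResidue Q' z π H Q) {y : V} (hy : π y ∉ H) (v : V) :
    ∃ c : F, QuadraticMap.polar Q' (v + c • z) y = 0 := by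
  have hp : QuadraticMap.polar Q' z y ≠ 0 := mt h.map_mem_iff.2 hy
  refine ⟨-QuadraticMap.polar Q' v y / QuadraticMap.polar Q' z y, ?_⟩
  simp [QuadraticMap.polar_add_left, QuadraticMap.polar_smul_left, hp]

lemma exists_map_sub_smul_mem (h : IsPointResidue Q' z π H Q) {y : V} (hy : π y ∉ H) (v : V) :
    ∃ c : F, π (v - c • y) ∈ H := by
  have hp : QuadraticMap.polar Q' z y ≠ 0 := mt h.map_mem_iff.2 hy
  refine ⟨QuadraticMap.polar Q' z v / QuadraticMap.polar Q' z y, h.map_mem_iff.2 ?_⟩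
  simp [QuadraticMap.polar_sub_right, QuadraticMap.polar_smul_right, hp]

lemma quadNondeg_comp_subtype (h : IsPointResidue Q' z π H Q) (hz : z ∈ M) (hM : ¬M.map π ≤ H)
    (hQ' : QuadNondeg (Q'.comp M.subtype)) :
    QuadNondeg (Q.comp ((M.map π).comap H.subtype).subtype) := by
  rw [quadNondeg_comp_subtype_iff] at hQ' ⊢
  rintro ⟨_, hvH⟩ ⟨v, hv, rfl⟩ hsing hperp
  obtain ⟨_, ⟨y, hy, rfl⟩, hyH⟩ := SetLike.not_le_iff_exists.1 hM
  obtain ⟨c, hc⟩ := h.exists_polar_add_smul_eq_zero hyH v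
  have hzero : v + c • z = 0 := by
    refine hQ' _ (M.add_mem hv (M.smul_mem c hz)) ?_ fun x hx => ?_
    · rw [map_add_smul_of_singular h.singular, h.map_mem_iff.1 hvH, ← h.form_eq v hvH, hsing,
        mul_zero, add_zero]
    · obtain ⟨d, hd⟩ := h.exists_map_sub_smul_mem hyH x
      have hperp' := hperp ⟨_, hd⟩ ⟨_, M.sub_mem hx (M.smul_mem d hy), rfl⟩
      rw [h.polar_eq] at hperp'
      rw [← sub_add_cancel x (d • y), QuadraticMap.polar_add_right, QuadraticMap.polar_smul_right,
        hc, QuadraticMap.polar_add_left, hperp', QuadraticMap.polar_smul_left, h.map_mem_iff.1 hd]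
      simp
  have hπ : π v = 0 := by simpa [h.map_eq_zero] using congrArg π hzero
  exact Subtype.ext hπ

lemma quadNondeg_iff (h : IsPointResidue Q' z π H Q) : QuadNondeg Q' ↔ QuadNondeg Q := by
  constructor
  · intro hQ'
    obtain ⟨y, hy⟩ := h.exists_notMem
    have := h.quadNondeg_comp_subtype (M := ⊤) mem_top (fun hle => hy (hle ⟨y, mem_top, rfl⟩))
      (quadNondeg_comp_subtype_iff.2 fun v _ hv hp => hQ' v hv fun x => hp x mem_top)
    rw [quadNondeg_comp_subtype_iff, Submodule.map_top, LinearMap.range_eq_top.2 h.surjective]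
      at this
    exact fun v hv hp => this v mem_top hv fun x _ => hp x
  · intro hQ v hv hp
    have hvH : π v ∈ H := h.map_mem_iff.2 (QuadraticMap.polar_comm Q' z v ▸ hp z)
    have hπ := hQ ⟨π v, hvH⟩ (by rw [h.form_eq, hv]) fun ⟨u, hu⟩ => by
      obtain ⟨x, rfl⟩ := h.surjective u
      rw [h.polar_eq, hp]
    obtain ⟨c, rfl⟩ := h.exists_eq_add_smul (w := 0) (by simpa using hπ)
    obtain ⟨y, hy⟩ := h.exists_notMem
    have hc : c = 0 := by simpa [mt h.map_mem_iff.2 hy, QuadraticMap.polar_smul_left] using hp y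
    simp [hc]

lemma isTotallySingular_comap_inf_vecPerp (h : IsPointResidue Q' z π H Q) {w : V} (hw : Q' w = 0)
    (hwH : π w ∉ H) (hwS : π w ∈ S) (hS : IsTotallySingular Q (S.comap H.subtype)) :
    IsTotallySingular Q' (S.comap π ⊓ vecPerp Q' w) := by
  rintro v ⟨hvS, hvw⟩
  obtain ⟨c, hc⟩ := h.exists_map_sub_smul_mem hwH v
  have hsing : Q' (v - c • w) = 0 := by
    rw [← h.form_eq _ hc]
    refine hS _ ?_
    simpa using S.sub_mem hvS (S.smul_mem c hwS)
  rw [← sub_add_cancel v (c • w), QuadraticMap.map_add Q', hsing]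
  simp [QuadraticMap.map_smul, hw, QuadraticMap.polar_smul_right, QuadraticMap.polar_smul_left,
    QuadraticMap.polar_sub_left, QuadraticMap.polar_comm Q' v w, mem_vecPerp.1 hvw]

lemma map_comap_inf_vecPerp (h : IsPointResidue Q' z π H Q) {w : V} (hwH : π w ∉ H) :
    (S.comap π ⊓ vecPerp Q' w).map π = S := by
  apply le_antisymm
  · rintro _ ⟨v, hv, rfl⟩
    exact hv.1
  · intro s hs
    obtain ⟨v, rfl⟩ := h.surjective s
    obtain ⟨c, hc⟩ := h.exists_polar_add_smul_eq_zero hwH v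
    exact ⟨v + c • z, ⟨by simpa [h.map_eq_zero] using hs,
      mem_vecPerp.2 (QuadraticMap.polar_comm Q' w _ ▸ hc)⟩, by simp [h.map_eq_zero]⟩

lemma finrank_ker (h : IsPointResidue Q' z π H Q) : finrank F (LinearMap.ker π) = 1 := by
  rw [h.ker_eq, finrank_span_singleton h.ne_zero]

lemma inf_ker_eq_bot (h : IsPointResidue Q' z π H Q) (hz : z ∉ W) : W ⊓ LinearMap.ker π = ⊥ := by
  rw [h.ker_eq, ← disjoint_iff]
  exact (disjoint_span_singleton' h.ne_zero).2 hz

lemma map_le (h : IsPointResidue Q' z π H Q) (hW : IsTotallySingular Q' W) (hz : z ∈ W) :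
    W.map π ≤ H := by
  rintro _ ⟨v, hv, rfl⟩
  exact h.map_mem_iff.2 (hW.polar_eq_zero hz hv)

section Finrank

variable [FiniteDimensional F V]

lemma mem_iff_map_le (h : IsPointResidue Q' z π H Q) (hG : IsGenerator Q' G) :
    z ∈ G ↔ G.map π ≤ H :=
  ⟨h.map_le hG.1, fun hle => hG.mem_of_polar_eq_zero h.singular fun x hx =>
    QuadraticMap.polar_comm Q' z x ▸ h.map_mem_iff.1 (hle (mem_map_of_mem hx))⟩

lemma finrank_comap (h : IsPointResidue Q' z π H Q) (N : Submodule F U) :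
    finrank F (N.comap π) = finrank F N + 1 := by
  have hker : N.comap π ⊓ LinearMap.ker π = LinearMap.ker π :=
    inf_eq_right.2 fun v hv => by simp [LinearMap.mem_ker.1 hv]
  rw [← finrank_map_add_finrank_inf_ker π, hker, h.finrank_ker,
    map_comap_eq_of_surjective h.surjective]

lemma finrank_add_one (h : IsPointResidue Q' z π H Q) : finrank F H + 1 = finrank F U := by
  obtain ⟨y, hy⟩ := h.exists_notMem
  have hne : Q'.polarBilin z ≠ 0 := fun h0 =>
    hy (h.map_mem_iff.2 (DFunLike.congr_fun h0 y))
  have hperp := Module.Dual.finrank_ker_add_one_of_ne_zero hne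
  have htop := h.finrank_comap ⊤
  have hH := h.finrank_comap H
  rw [h.comap_eq, vecPerp] at hH
  rw [comap_top, finrank_top, finrank_top] at htop
  omega

lemma finrank_add_two (h : IsPointResidue Q' z π H Q) : finrank F H + 2 = finrank F V := by
  have htop := h.finrank_comap ⊤
  rwa [comap_top, finrank_top, finrank_top, ← h.finrank_add_one, eq_comm] at htop

lemma finrank_comap_map_subtype (h : IsPointResidue Q' z π H Q) (N : Submodule F H) :
    finrank F ((N.map H.subtype).comap π) = finrank F N + 1 := by
  rw [h.finrank_comap, finrank_map_subtype_eq]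

variable [FiniteDimensional F U]

lemma finrank_le_finrank_comap_map_add_one (h : IsPointResidue Q' z π H Q)
    (hW : IsTotallySingular Q' W) : finrank F W ≤ finrank F ((W.map π).comap H.subtype) + 1 := by
  have hmap := finrank_map_add_finrank_inf_ker π W
  by_cases hz : z ∈ W
  · have hker := finrank_mono (inf_le_right : W ⊓ LinearMap.ker π ≤ _)
    rw [h.finrank_ker] at hker
    rw [← finrank_inf_eq_finrank_comap_subtype, inf_eq_left.2 (h.map_le hW hz)]
    omega
  · rw [h.inf_ker_eq_bot hz, finrank_bot] at hmap
    by_cases hle : W.map π ≤ H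
    · rw [← finrank_inf_eq_finrank_comap_subtype, inf_eq_left.2 hle]
      omega
    · rw [finrank_comap_subtype_add_one h.finrank_add_one hle]
      omega

lemma wittIndex_eq (h : IsPointResidue Q' z π H Q) : wittIndex Q' = wittIndex Q + 1 := by
  apply le_antisymm
  · exact wittIndex_le fun W hW => (h.finrank_le_finrank_comap_map_add_one hW).trans
      (Nat.add_le_add_right (h.isTotallySingular_comap_map hW).finrank_le_wittIndex 1)
  · obtain ⟨N, hN⟩ := exists_isGenerator Q
    rw [← hN.2, ← h.finrank_comap_map_subtype]
    exact (h.isTotallySingular_comap_map_subtype hN.1).finrank_le_wittIndex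

lemma isGenerator_comap_map (h : IsPointResidue Q' z π H Q) (hG : IsGenerator Q' G) :
    IsGenerator Q ((G.map π).comap H.subtype) := by
  have hsing := h.isTotallySingular_comap_map hG.1
  refine ⟨hsing, hsing.finrank_le_wittIndex.antisymm ?_⟩
  have hle := h.finrank_le_finrank_comap_map_add_one hG.1
  rwa [hG.2, h.wittIndex_eq, Nat.add_le_add_iff_right] at hle

lemma isGenerator_comap_map_subtype (h : IsPointResidue Q' z π H Q) {N : Submodule F H}
    (hN : IsGenerator Q N) : IsGenerator Q' ((N.map H.subtype).comap π) :=
  ⟨h.isTotallySingular_comap_map_subtype hN.1,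
    by rw [h.finrank_comap_map_subtype, hN.2, h.wittIndex_eq]⟩

lemma exists_isGenerator_map_eq (h : IsPointResidue Q' z π H Q) (hSH : ¬S ≤ H)
    (hS : IsGenerator Q (S.comap H.subtype)) : ∃ L, IsGenerator Q' L ∧ L.map π = S := by
  obtain ⟨u, huS, huH⟩ := SetLike.not_le_iff_exists.1 hSH
  obtain ⟨w, ⟨rfl, hw⟩, -⟩ := h.existsUnique_singular huH
  have hmap := h.map_comap_inf_vecPerp (S := S) huH
  have hsing := h.isTotallySingular_comap_inf_vecPerp hw huH huS hS.1
  refine ⟨_, ⟨hsing, hsing.finrank_le_wittIndex.antisymm ?_⟩, hmap⟩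
  calc wittIndex Q' = finrank F S := by
        rw [h.wittIndex_eq, ← hS.2, finrank_comap_subtype_add_one h.finrank_add_one hSH]
    _ = finrank F ((S.comap π ⊓ vecPerp Q' w).map π) := by rw [hmap]
    _ ≤ _ := finrank_map_le π _

end Finrank

end IsPointResidue

lemma exists_isPointResidue_of_form [FiniteDimensional F V] [FiniteDimensional F U]
    {H : Submodule F U} (hV : finrank F V = finrank F U + 1) (hH : finrank F H + 1 = finrank F U)
    (Q : QuadraticForm F H) :
    ∃ (Q' : QuadraticForm F V) (z : V) (π : V →ₗ[F] U), IsPointResidue Q' z π H Q := by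
  have hne : H ≠ ⊤ := fun h => by rw [h, finrank_top] at hH; omega
  obtain ⟨f, hf, hfH⟩ := exists_le_ker_of_lt_top H hne.lt_top
  have hker : LinearMap.ker f = H :=
    (eq_of_le_of_finrank_eq hfH (Nat.add_right_cancel
      (hH.trans (Module.Dual.finrank_ker_add_one_of_ne_zero hf).symm))).symm
  obtain ⟨p, hp⟩ := H.subtype.exists_leftInverse_of_injective H.ker_subtype
  let φ : V ≃ₗ[F] F × U := LinearEquiv.ofFinrankEq _ _ (by simp [hV, add_comm])
  let π := LinearMap.snd F F U ∘ₗ φ.toLinearMap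
  let g := LinearMap.fst F F U ∘ₗ φ.toLinearMap
  have hgz : g (φ.symm (1, 0)) = 1 := by simp [g]
  have hπz : π (φ.symm (1, 0)) = 0 := by simp [π]
  refine ⟨QuadraticMap.linMulLin g (f ∘ₗ π) + Q.comp (p ∘ₗ π), φ.symm (1, 0), π, ?_, ?_, ?_, ?_,
    hne, ?_⟩
  · exact Prod.snd_surjective.comp φ.surjective
  · ext v
    rw [LinearMap.mem_ker, mem_span_singleton]
    constructor
    · exact fun hv => ⟨g v, φ.injective (Prod.ext (by simp [g]) (by simpa [π] using hv.symm))⟩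
    · rintro ⟨c, rfl⟩
      simp [hπz]
  · simp [hπz]
  · ext v
    have hpolar : QuadraticMap.polar (QuadraticMap.linMulLin g (f ∘ₗ π) + Q.comp (p ∘ₗ π))
        (φ.symm (1, 0)) v = f (π v) := by
      simp only [QuadraticMap.polar, add_apply, QuadraticMap.linMulLin_apply,
        QuadraticMap.comp_apply, LinearMap.comp_apply, map_add, hgz, hπz, map_zero, zero_add]
      ring
    rw [mem_comap, mem_vecPerp, hpolar, ← hker, LinearMap.mem_ker]
  · intro v hv
    have hpv : p (π v) = ⟨π v, hv⟩ := DFunLike.congr_fun hp ⟨π v, hv⟩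
    have hfv : f (π v) = 0 := LinearMap.mem_ker.1 (hker ▸ hv)
    simp [hpv, hfv]

lemma QuadNondeg.exists_isPointResidue [FiniteDimensional F V] [FiniteDimensional F U]
    (hV : finrank F V = finrank F U + 1) {Q' : QuadraticForm F V} (hQ' : QuadNondeg Q') {z : V}
    (hz : z ≠ 0) (hsing : Q' z = 0) :
    ∃ (π : V →ₗ[F] U) (H : Submodule F U) (Q : QuadraticForm F H), IsPointResidue Q' z π H Q := by
  have hfin : finrank F (V ⧸ span F {z}) = finrank F U := by
    have := finrank_quotient_add_finrank (span F {z})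
    rw [finrank_span_singleton hz] at this
    omega
  let φ := LinearEquiv.ofFinrankEq _ _ hfin
  let π := φ.toLinearMap ∘ₗ (span F {z}).mkQ
  have hsurj : Function.Surjective π := φ.surjective.comp (mkQ_surjective _)
  have hker : LinearMap.ker π = span F {z} := by simp [π, LinearMap.ker_comp]
  have hcomap : ((vecPerp Q' z).map π).comap π = vecPerp Q' z := by
    rw [comap_map_eq, hker, sup_eq_left, span_singleton_le_iff_mem, mem_vecPerp]
    simp [hsing]
  obtain ⟨s, hs⟩ := π.exists_rightInverse_of_surjective (LinearMap.range_eq_top.2 hsurj)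
  refine ⟨π, _, Q'.comp (s ∘ₗ Submodule.subtype _), hsurj, hker, hsing, hcomap,
    fun htop => hz ?_, ?_⟩
  · rw [htop, comap_top] at hcomap
    exact hQ' z hsing fun x => mem_vecPerp.1 (hcomap ▸ mem_top)
  · intro v hv
    have hmem : s (π v) - v ∈ LinearMap.ker π := by
      simpa [sub_eq_zero] using DFunLike.congr_fun hs (π v)
    rw [hker, mem_span_singleton] at hmem
    obtain ⟨c, hc⟩ := hmem
    have hperp : QuadraticMap.polar Q' z v = 0 := mem_vecPerp.1 (hcomap ▸ hv)
    have hsv : s (π v) = v + c • z := by rw [hc, add_sub_cancel]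
    simp [hsv, map_add_smul_of_singular hsing, hperp]

end Residue

section SpreadToAvsp

variable {F V U : Type*} [Field F] [AddCommGroup V] [Module F V] [AddCommGroup U] [Module F U]
  {Q' : QuadraticForm F V} {z : V} {π : V →ₗ[F] U}
  {H : Submodule F U} {Q : QuadraticForm F H}

namespace IsPointResidue

variable {G G' G₀ : Submodule F V}

lemma map_inf_map_eq_bot (h : IsPointResidue Q' z π H Q) (hz : z ∈ G₀) (hGG₀ : G ⊓ G₀ = ⊥) :
    G.map π ⊓ G₀.map π = ⊥ := by
  rw [eq_bot_iff]
  rintro _ ⟨⟨v, hv, rfl⟩, ⟨w, hw, hwv⟩⟩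
  obtain ⟨c, rfl⟩ := h.exists_eq_add_smul hwv.symm
  have hmem : w + c • z ∈ G ⊓ G₀ := ⟨hv, G₀.add_mem hw (G₀.smul_mem c hz)⟩
  rw [hGG₀, mem_bot] at hmem
  simp [hmem]

lemma existsUnique_mem_image_map (h : IsPointResidue Q' z π H Q) {𝒮 : Set (Submodule F V)}
    (h𝒮 : IsSpread Q' 𝒮) (hG₀ : G₀ ∈ 𝒮) (hz : z ∈ G₀) {u : U} (hu : u ∉ H) :
    ∃! S, S ∈ Submodule.map π '' (𝒮 \ {G₀}) ∧ u ∈ S := by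
  obtain ⟨v, ⟨rfl, hv⟩, -⟩ := h.existsUnique_singular hu
  obtain ⟨G, hG, hvG⟩ := h𝒮.2.2 v hv
  have hne : G ≠ G₀ := by
    rintro rfl
    exact hu (h.map_le (h𝒮.1 G hG).1 hz (mem_map_of_mem hvG))
  refine ⟨_, ⟨⟨G, ⟨hG, hne⟩, rfl⟩, mem_map_of_mem hvG⟩, ?_⟩
  rintro _ ⟨⟨G', ⟨hG', -⟩, rfl⟩, hvG'⟩
  by_contra hne'
  have hmem : v ∈ G' ⊓ G := ⟨h.mem_of_map_mem (h𝒮.1 G' hG').1 hv hu hvG', hvG⟩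
  rw [h𝒮.2.1 G' hG' G hG (fun heq => hne' (by rw [heq])), mem_bot] at hmem
  exact hu (by simp [hmem])

variable [FiniteDimensional F V]

lemma finrank_map_of_notMem (h : IsPointResidue Q' z π H Q) (hz : z ∉ G) :
    finrank F (G.map π) = finrank F G := by
  rw [← finrank_map_add_finrank_inf_ker π G, h.inf_ker_eq_bot hz, finrank_bot, add_zero]

lemma finrank_map_inf_map (h : IsPointResidue Q' z π H Q) (hz : z ∉ G) (hz' : z ∉ G')
    (hGG' : G ⊓ G' = ⊥) :
    finrank F ↥(G.map π ⊓ G'.map π) = finrank F ↥((G ⊔ G') ⊓ LinearMap.ker π) := by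
  rw [← _root_.finrank_map_inf_map π hGG', h.inf_ker_eq_bot hz, h.inf_ker_eq_bot hz', finrank_bot,
    add_zero, add_zero]

lemma finrank_map_inf_map_le_one (h : IsPointResidue Q' z π H Q) (hz : z ∉ G) (hz' : z ∉ G')
    (hGG' : G ⊓ G' = ⊥) : finrank F ↥(G.map π ⊓ G'.map π) ≤ 1 := by
  rw [h.finrank_map_inf_map hz hz' hGG', ← h.finrank_ker]
  exact finrank_mono inf_le_right

lemma mem_sup_of_map_inf_map_ne_bot (h : IsPointResidue Q' z π H Q) (hz : z ∉ G) (hz' : z ∉ G')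
    (hGG' : G ⊓ G' = ⊥) (hne : G.map π ⊓ G'.map π ≠ ⊥) : z ∈ G ⊔ G' := by
  by_contra hsup
  have hfin := h.finrank_map_inf_map hz hz' hGG'
  rw [h.inf_ker_eq_bot hsup, finrank_bot, finrank_eq_zero] at hfin
  exact hne hfin

variable [FiniteDimensional F U]

lemma comap_map_ne (h : IsPointResidue Q' z π H Q) (hw : 2 ≤ wittIndex Q)
    (hG : IsGenerator Q' G) (hz : z ∉ G) (hz' : z ∉ G') (hGG' : G ⊓ G' = ⊥) :
    (G.map π).comap H.subtype ≠ (G'.map π).comap H.subtype := by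
  intro heq
  have hle : finrank F ((G.map π ⊓ G'.map π).comap H.subtype) ≤ 1 := by
    rw [← finrank_inf_eq_finrank_comap_subtype]
    exact (finrank_mono inf_le_left).trans (h.finrank_map_inf_map_le_one hz hz' hGG')
  rw [comap_inf, ← heq, inf_idem, (h.isGenerator_comap_map hG).2] at hle
  omega

lemma hyperbolic_comap_map_sup (h : IsPointResidue Q' z π H Q) (hG : IsGenerator Q' G)
    (hG' : IsGenerator Q' G') (hz : z ∉ G) (hGG' : G ⊓ G' = ⊥) (hsup : z ∈ G ⊔ G') :
    QuadNondeg (Q.comp ((G.map π ⊔ G'.map π).comap H.subtype).subtype) ∧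
      finrank F ((G.map π ⊔ G'.map π).comap H.subtype) =
        2 * wittIndex (Q.comp ((G.map π ⊔ G'.map π).comap H.subtype).subtype) := by
  have hGH : ¬G.map π ≤ H := mt (h.mem_iff_map_le hG).2 hz
  have hsupH : ¬(G ⊔ G').map π ≤ H := fun hle => hGH ((Submodule.map_mono le_sup_left).trans hle)
  rw [← Submodule.map_sup]
  refine ⟨h.quadNondeg_comp_subtype hsup hsupH (hG.quadNondeg_sup hG' hGG'), ?_⟩
  rw [(h.isGenerator_comap_map hG).wittIndex_comp_subtype
    (comap_mono (Submodule.map_mono le_sup_left))]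
  have hker : (G ⊔ G') ⊓ LinearMap.ker π = LinearMap.ker π := by
    rwa [inf_eq_right, h.ker_eq, span_singleton_le_iff_mem]
  have hmap := finrank_map_add_finrank_inf_ker π (G ⊔ G')
  have hcomap := finrank_comap_subtype_add_one h.finrank_add_one hsupH
  have hsum := finrank_sup_add_finrank_inf_eq G G'
  rw [hker, h.finrank_ker] at hmap
  rw [hGG', finrank_bot, hG.2, hG'.2, h.wittIndex_eq] at hsum
  omega

end IsPointResidue

lemma IsSpread.notMem_of_ne {𝒮 : Set (Submodule F V)} (h𝒮 : IsSpread Q' 𝒮) (hz0 : z ≠ 0)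
    {G G₀ : Submodule F V} (hG₀ : G₀ ∈ 𝒮) (hz : z ∈ G₀) (hG : G ∈ 𝒮) (hne : G ≠ G₀) : z ∉ G :=
  fun hzG => hz0 <| by
    simpa [h𝒮.2.1 G hG G₀ hG₀ hne] using (show z ∈ G ⊓ G₀ from ⟨hzG, hz⟩)

lemma existsUnique_le_of_existsUnique_mem {P : Set (Submodule F U)}
    (hP : ∀ u ∉ H, ∃! S, S ∈ P ∧ u ∈ S) {L : Submodule F U} (hL : finrank F L = 1)
    (hLH : ¬L ≤ H) : ∃! S, S ∈ P ∧ L ≤ S := by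
  obtain ⟨u, huL, huH⟩ := SetLike.not_le_iff_exists.1 hLH
  have hu : u ≠ 0 := fun h0 => huH (h0 ▸ H.zero_mem)
  have : FiniteDimensional F L := .of_finrank_pos (by omega)
  have hspan : span F {u} = L := eq_of_le_of_finrank_eq ((span_singleton_le_iff_mem u L).2 huL)
    (by rw [hL, finrank_span_singleton hu])
  simpa only [← hspan, span_singleton_le_iff_mem] using hP u huH

variable [Fintype F] [FiniteDimensional F V] [FiniteDimensional F U]

lemma IsSpread.ncard_image_map_diff_singleton {𝒮 : Set (Submodule F V)} (h𝒮 : IsSpread Q' 𝒮)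
    (hQ' : QuadNondeg Q') (h : IsPointResidue Q' z π H Q) {e : ℕ} (hw : 2 ≤ wittIndex Q)
    (he : finrank F H = 2 * wittIndex Q + e) {G₀ : Submodule F V} (hG₀ : G₀ ∈ 𝒮) (hz : z ∈ G₀) :
    (Submodule.map π '' (𝒮 \ {G₀})).ncard = Fintype.card F ^ (wittIndex Q + e) := by
  have hinj : Set.InjOn (Submodule.map π) (𝒮 \ {G₀}) := fun G hG G' hG' heq => by
    by_contra hne
    exact h.comap_map_ne hw (h𝒮.1 G hG.1) (h𝒮.notMem_of_ne h.ne_zero hG₀ hz hG.1 hG.2)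
      (h𝒮.notMem_of_ne h.ne_zero hG₀ hz hG'.1 hG'.2) (h𝒮.2.1 G hG.1 G' hG'.1 hne) (by rw [heq])
  have hV : finrank F V = 2 * (wittIndex Q + 1) + e := by
    have := h.finrank_add_two
    omega
  rw [hinj.ncard_image, Set.ncard_sdiff_singleton_of_mem hG₀,
    (h𝒮.isPartialSpread.isSpread_iff_ncard hQ' h.wittIndex_eq hV).1 h𝒮,
    Nat.add_sub_cancel]

theorem IsSpread.isAvsp_image_map {𝒮 : Set (Submodule F V)} (h𝒮 : IsSpread Q' 𝒮)
    (hQ' : QuadNondeg Q') (h : IsPointResidue Q' z π H Q) {e r : ℕ} (hw : 2 ≤ wittIndex Q)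
    (hr : finrank F H = r + 1) (he : finrank F H = 2 * wittIndex Q + e) {G₀ : Submodule F V}
    (hG₀ : G₀ ∈ 𝒮) (hz : z ∈ G₀) :
    IsAvsp e r H Q ((G₀.map π).comap H.subtype) (Submodule.map π '' (𝒮 \ {G₀})) := by
  have hgen {G} (hG : G ∈ 𝒮 \ {G₀}) : IsGenerator Q' G := h𝒮.1 G hG.1
  have hnot {G} (hG : G ∈ 𝒮 \ {G₀}) : z ∉ G := h𝒮.notMem_of_ne h.ne_zero hG₀ hz hG.1 hG.2
  have hinf {G G'} (hG : G ∈ 𝒮 \ {G₀}) (hG' : G' ∈ 𝒮 \ {G₀}) (hne : G.map π ≠ G'.map π) :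
      G ⊓ G' = ⊥ := h𝒮.2.1 G hG.1 G' hG'.1 fun heq => hne (heq ▸ rfl)
  refine ⟨?_, ?_, fun L => existsUnique_le_of_existsUnique_mem fun u =>
    h.existsUnique_mem_image_map h𝒮 hG₀ hz, ?_, ?_, ?_, ?_⟩
  · rw [h𝒮.ncard_image_map_diff_singleton hQ' h hw he hG₀ hz]
    congr 1
    omega
  · rintro _ ⟨G, hG, rfl⟩
    rw [h.finrank_map_of_notMem (hnot hG), (hgen hG).2, h.wittIndex_eq]
    exact ⟨by omega, mt (h.mem_iff_map_le (hgen hG)).2 (hnot hG)⟩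
  · rintro _ ⟨G, hG, rfl⟩
    refine ⟨h.isGenerator_comap_map (hgen hG), ?_⟩
    rw [← comap_inf, h.map_inf_map_eq_bot hz (h𝒮.2.1 G hG.1 G₀ hG₀ hG.2), comap_bot, ker_subtype]
  · rintro _ ⟨G, hG, rfl⟩ _ ⟨G', hG', rfl⟩ hne
    exact h.comap_map_ne hw (hgen hG) (hnot hG) (hnot hG') (hinf hG hG' hne)
  · rintro _ ⟨G, hG, rfl⟩ _ ⟨G', hG', rfl⟩ hne
    exact h.finrank_map_inf_map_le_one (hnot hG) (hnot hG') (hinf hG hG' hne)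
  · rintro _ ⟨G, hG, rfl⟩ _ ⟨G', hG', rfl⟩ hne hone
    refine h.hyperbolic_comap_map_sup (hgen hG) (hgen hG') (hnot hG) (hinf hG hG' hne)
      (h.mem_sup_of_map_inf_map_ne_bot (hnot hG) (hnot hG') (hinf hG hG' hne) fun hbot => ?_)
    rw [← comap_inf, hbot, comap_bot, ker_subtype, finrank_bot] at hone
    exact zero_ne_one hone

end SpreadToAvsp

section AvspToSpread

variable {F V U : Type*} [Field F] [Fintype F] [AddCommGroup V] [Module F V]
  [FiniteDimensional F V] [AddCommGroup U] [Module F U]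
  {Q' : QuadraticForm F V} {z : V} {π : V →ₗ[F] U} {H : Submodule F U} {Q : QuadraticForm F H}
  {e r : ℕ} {Pgen : Submodule F H} {P : Set (Submodule F U)} {L L' : Submodule F V}

namespace IsAvsp

lemma eq_of_mem (hP : IsAvsp e r H Q Pgen P) {S T : Submodule F U} (hS : S ∈ P) (hT : T ∈ P)
    {u : U} (hu : u ∉ H) (huS : u ∈ S) (huT : u ∈ T) : S = T := by
  have hu0 : u ≠ 0 := fun h0 => hu (h0 ▸ H.zero_mem)
  refine (hP.2.2.1 (span F {u}) (finrank_span_singleton hu0) ?_).unique ⟨hS, ?_⟩ ⟨hT, ?_⟩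
  all_goals rwa [span_singleton_le_iff_mem]

lemma notMem_of_map_mem (hP : IsAvsp e r H Q Pgen P) (h : IsPointResidue Q' z π H Q)
    (hL : IsGenerator Q' L) (hLP : L.map π ∈ P) : z ∉ L :=
  mt (h.mem_iff_map_le hL).1 (hP.2.1 _ hLP).2

lemma eq_zero_of_map_eq_zero (hP : IsAvsp e r H Q Pgen P) (h : IsPointResidue Q' z π H Q)
    (hL : IsGenerator Q' L) (hLP : L.map π ∈ P) {v : V} (hv : v ∈ L) (hπv : π v = 0) : v = 0 := by
  have hmem : v ∈ L ⊓ LinearMap.ker π := ⟨hv, hπv⟩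
  rwa [h.inf_ker_eq_bot (hP.notMem_of_map_mem h hL hLP)] at hmem

lemma inf_comap_map_subtype_eq_bot (hP : IsAvsp e r H Q Pgen P) (h : IsPointResidue Q' z π H Q)
    (hL : IsGenerator Q' L) (hLP : L.map π ∈ P) :
    L ⊓ (Pgen.map H.subtype).comap π = ⊥ := by
  rw [eq_bot_iff]
  rintro v ⟨hv, x, hx, hxv⟩
  have hmem : x ∈ (L.map π).comap H.subtype ⊓ Pgen := ⟨⟨v, hv, hxv.symm⟩, hx⟩
  rw [(hP.2.2.2.1 _ hLP).2, mem_bot] at hmem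
  exact hP.eq_zero_of_map_eq_zero h hL hLP hv (by rw [← hxv, hmem, map_zero])

lemma ncard_insert_image (hP : IsAvsp e r H Q Pgen P) (h : IsPointResidue Q' z π H Q)
    {lift : Submodule F U → Submodule F V} (hgen : ∀ S ∈ P, IsGenerator Q' (lift S))
    (hmap : ∀ S ∈ P, (lift S).map π = S) :
    (insert ((Pgen.map H.subtype).comap π) (lift '' P)).ncard =
      Fintype.card F ^ ((r + e + 1) / 2) + 1 := by
  have := Module.finite_of_finite F (M := V)
  have hz : z ∈ (Pgen.map H.subtype).comap π := by simp [h.map_eq_zero]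
  have hnotMem : (Pgen.map H.subtype).comap π ∉ lift '' P := by
    rintro ⟨S, hS, heq⟩
    exact hP.notMem_of_map_mem h (hgen S hS) ((hmap S hS).symm ▸ hS) (heq ▸ hz)
  have hinj : Set.InjOn lift P := Set.LeftInvOn.injOn hmap
  rw [Set.ncard_insert_of_notMem hnotMem, hinj.ncard_image, hP.1]

variable [FiniteDimensional F U]

lemma inf_eq_bot_of_map_ne (hP : IsAvsp e r H Q Pgen P) (h : IsPointResidue Q' z π H Q)
    (hL : IsGenerator Q' L) (hL' : IsGenerator Q' L') (hLP : L.map π ∈ P) (hLP' : L'.map π ∈ P)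
    (hne : L.map π ≠ L'.map π) : L ⊓ L' = ⊥ := by
  rw [eq_bot_iff]
  rintro v ⟨hv, hv'⟩
  have hvH : π v ∈ H := by
    by_contra hvH
    exact hne (hP.eq_of_mem hLP hLP' hvH (mem_map_of_mem hv) (mem_map_of_mem hv'))
  refine hP.eq_zero_of_map_eq_zero h hL hLP hv ?_
  by_contra hπv
  have hone : finrank F ↥((L.map π).comap H.subtype ⊓ (L'.map π).comap H.subtype) = 1 := by
    refine le_antisymm ?_ (one_le_finrank_iff.2 ?_)
    · rw [← comap_inf, ← finrank_inf_eq_finrank_comap_subtype]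
      exact (finrank_mono inf_le_left).trans (hP.2.2.2.2.2.1 _ hLP _ hLP' hne)
    · refine (Submodule.ne_bot_iff _).2 ⟨⟨π v, hvH⟩, ⟨mem_map_of_mem hv, mem_map_of_mem hv'⟩, ?_⟩
      simpa [Subtype.ext_iff] using hπv
  have hnondeg := (hP.2.2.2.2.2.2 _ hLP _ hLP' hne hone).1
  rw [quadNondeg_comp_subtype_iff, ← Submodule.map_sup] at hnondeg
  have hzero := hnondeg ⟨π v, hvH⟩ (mem_map_of_mem (mem_sup_left hv))
    (by rw [h.form_eq, hL.1 v hv]) ?_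
  · exact hπv (congrArg Subtype.val hzero)
  · rintro ⟨_, hwH⟩ ⟨w, hw, rfl⟩
    obtain ⟨a, ha, b, hb, rfl⟩ := mem_sup.1 hw
    rw [h.polar_eq, QuadraticMap.polar_add_right, hL.1.polar_eq_zero hv ha,
      hL'.1.polar_eq_zero hv' hb, add_zero]

lemma isPartialSpread_insert_image (hP : IsAvsp e r H Q Pgen P) (h : IsPointResidue Q' z π H Q)
    (hPgen : IsGenerator Q Pgen) {lift : Submodule F U → Submodule F V}
    (hgen : ∀ S ∈ P, IsGenerator Q' (lift S)) (hmap : ∀ S ∈ P, (lift S).map π = S) :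
    IsPartialSpread Q' (insert ((Pgen.map H.subtype).comap π) (lift '' P)) := by
  have hmem (S) (hS : S ∈ P) : (lift S).map π ∈ P := (hmap S hS).symm ▸ hS
  refine IsPartialSpread.insert ⟨?_, ?_⟩ (h.isGenerator_comap_map_subtype hPgen) ?_
  · rintro _ ⟨S, hS, rfl⟩
    exact hgen S hS
  · rintro _ ⟨S, hS, rfl⟩ _ ⟨T, hT, rfl⟩ hST
    refine hP.inf_eq_bot_of_map_ne h (hgen S hS) (hgen T hT) (hmem S hS) (hmem T hT) ?_
    rw [hmap S hS, hmap T hT]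
    exact fun heq => hST (congrArg lift heq)
  · rintro _ ⟨S, hS, rfl⟩
    exact hP.inf_comap_map_subtype_eq_bot h (hgen S hS) (hmem S hS)

theorem exists_isSpread (hP : IsAvsp e r H Q Pgen P) (h : IsPointResidue Q' z π H Q)
    (hQ : QuadNondeg Q) (hPgen : IsGenerator Q Pgen) (hr : finrank F H = r + 1)
    (he : finrank F H = 2 * wittIndex Q + e) : ∃ 𝒮, IsSpread Q' 𝒮 := by
  have hlift (S) (hS : S ∈ P) : ∃ L, IsGenerator Q' L ∧ L.map π = S :=
    h.exists_isGenerator_map_eq (hP.2.1 S hS).2 (hP.2.2.2.1 S hS).1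
  choose! lift hgen hmap using hlift
  have hV : finrank F V = 2 * (wittIndex Q + 1) + e := by
    have := h.finrank_add_two
    omega
  refine ⟨_, ((hP.isPartialSpread_insert_image h hPgen hgen hmap).isSpread_iff_ncard
    (h.quadNondeg_iff.2 hQ) h.wittIndex_eq hV).2 ?_⟩
  rw [hP.ncard_insert_image h hgen hmap]
  congr 2
  omega

end IsAvsp

end AvspToSpread

lemma exists_ne_zero_of_wittIndex_pos {F V : Type*} [Field F] [AddCommGroup V] [Module F V]
    [FiniteDimensional F V] {Q : QuadraticForm F V} (hQ : 0 < wittIndex Q) :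
    ∃ v ≠ 0, Q v = 0 := by
  obtain ⟨G, hG⟩ := exists_isGenerator Q
  obtain ⟨v, hv, hv0⟩ := (Submodule.ne_bot_iff G).1 (one_le_finrank_iff.1 (hG.2 ▸ hQ))
  exact ⟨v, hv0, hG.1 v hv⟩

theorem avsp_iff_spread {F : Type*} [Field F] [Fintype F] (e r : ℕ)
    (he : e = 0 ∨ e = 1 ∨ e = 2) (hre : e + 3 ≤ r) (hmod : r % 2 = (e + 1) % 2) :
    (∃ (H : Submodule F (Fin (r + 2) → F)) (Q : QuadraticForm F ↥H)
        (Pgen : Submodule F ↥H) (P : Set (Submodule F (Fin (r + 2) → F))),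
      Module.finrank F ↥H = r + 1 ∧ QuadNondeg Q ∧
      Module.finrank F ↥H = 2 * wittIndex Q + e ∧
      IsGenerator Q Pgen ∧ IsAvsp e r H Q Pgen P) ↔
    (∃ Q' : QuadraticForm F (Fin (r + 3) → F),
      QuadNondeg Q' ∧
      Module.finrank F (Fin (r + 3) → F) = 2 * wittIndex Q' + e ∧
      ∃ S : Set (Submodule F (Fin (r + 3) → F)), IsSpread Q' S) := by
  constructor
  · rintro ⟨H, Q, Pgen, P, hr, hQ, hfin, hPgen, hP⟩
    obtain ⟨Q', z, π, h⟩ := exists_isPointResidue_of_form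
      (V := Fin (r + 3) → F) (by simp) (by simp [hr]) Q
    refine ⟨Q', h.quadNondeg_iff.2 hQ, ?_, hP.exists_isSpread h hQ hPgen hr hfin⟩
    rw [h.wittIndex_eq, ← h.finrank_add_two, hfin]
    ring
  · rintro ⟨Q', hQ', hfin, 𝒮, h𝒮⟩
    have hw : 3 ≤ wittIndex Q' := by
      rw [finrank_fin_fun] at hfin
      omega
    obtain ⟨z, hz0, hsing⟩ := exists_ne_zero_of_wittIndex_pos (by omega : 0 < wittIndex Q')
    obtain ⟨G₀, hG₀, hz⟩ := h𝒮.2.2 z hsing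
    obtain ⟨π, H, Q, h⟩ := hQ'.exists_isPointResidue (U := Fin (r + 2) → F) (by simp) hz0 hsing
    have hwQ := h.wittIndex_eq
    have hH := h.finrank_add_two
    have hHr : finrank F H = r + 1 := by simpa using hH
    have hHe : finrank F H = 2 * wittIndex Q + e := by omega
    exact ⟨H, Q, _, _, hHr, h.quadNondeg_iff.1 hQ', hHe, h.isGenerator_comap_map (h𝒮.1 G₀ hG₀),
      h𝒮.isAvsp_image_map hQ' h (by omega) hHr hHe hG₀ hz⟩
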